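/- Let r and d be integers with 0 < d < r, let ε be the rectangular partition consisting of d parts all equal to r − d, let m = d(r − d) + 1, and let ε+2 denote the partition (r − d + 2, r − d, …, r − d) with d parts, obtained from ε by adding two boxes to the first row. Then 2 r (r + 1) · f^{ε+2} = m (m + 1) d (d + 1) · f^{ε}. -/

import Mathlib

/-- The cells of the Young diagram of the partition `l = (l 0, l 1, …, l (q-1))`:
the pair `⟨i, j⟩` is a cell iff `j < l i` (row `i`, column `j`, zero-indexed). -/
def sytShape (q : ℕ) (l : Fin q → ℕ) : Finset (Σ _ : Fin q, ℕ) :=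
  Finset.univ.sigma fun i => Finset.range (l i)

/-- `T` is a standard Young tableau of shape `l`: it is a bijective labelling of the
cells of the diagram by `1, …, |λ|` (here realized as `Fin (∑ i, l i)`) whose entries
strictly increase along each row and strictly increase down each column. -/
def IsSYT {q : ℕ} (l : Fin q → ℕ)
    (T : {x // x ∈ sytShape q l} ≃ Fin (∑ i, l i)) : Prop :=
  (∀ x y : {x // x ∈ sytShape q l},
      (x : Σ _ : Fin q, ℕ).1 = (y : Σ _ : Fin q, ℕ).1 →
      (x : Σ _ : Fin q, ℕ).2 < (y : Σ _ : Fin q, ℕ).2 → T x < T y) ∧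
  (∀ x y : {x // x ∈ sytShape q l},
      (x : Σ _ : Fin q, ℕ).1 < (y : Σ _ : Fin q, ℕ).1 →
      (x : Σ _ : Fin q, ℕ).2 = (y : Σ _ : Fin q, ℕ).2 → T x < T y)

/-- `f^λ`, the number of standard Young tableaux of shape `λ = l`. -/
noncomputable def sytCount (q : ℕ) (l : Fin q → ℕ) : ℕ :=
  Nat.card {T : {x // x ∈ sytShape q l} ≃ Fin (∑ i, l i) // IsSYT l T}

/-!
Frobenius' formula `f^λ ∏ L_i! = |λ|! ∏_{i < j} (L_i - L_j)`, with `L_i = λ_i + q - i`, follows by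
induction on `|λ|`. Removing the largest entry of a tableau gives `f^λ = ∑ f^{λ - e_i}` over the
corners `i`, and the right-hand side satisfies the same recurrence because
`∑ L_i Δ(L - e_i) = (∑ L_i - q (q - 1) / 2) Δ(L)` for the Vandermonde product `Δ`: the terms with
`i` not a corner vanish. To see the identity, write `Δ` as the determinant of falling factorials
`x (x - 1) ⋯ (x - j + 1)`, for which lowering `x` by one and multiplying by `x` is multiplication
by `x - j`. Adding `a` boxes to the first row of a rectangle changes only `L_1`, hence only the
factor `∏_{j > 1} (L_1 - L_j)` of `Δ`.
-/

open Finset Matrix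

section LinearExtensions

variable {α : Type*} (R : α → α → Prop)

open scoped Classical in
/-- The linear extensions of the restriction of `R` to `S`, encoded as the lists that enumerate `S`
without repetition and in which `y` never comes after `x` when `R y x`. -/
noncomputable def linearExtensions (S : Finset α) : Finset (List α) :=
  {w ∈ ⟨S.val.lists, Multiset.lists_nodup_finset S⟩ | w.Pairwise fun x y => ¬ R y x}

variable {R} {S : Finset α}

theorem mem_linearExtensions {w : List α} :
    w ∈ linearExtensions R S ↔ S.val = w ∧ w.Pairwise fun x y => ¬ R y x := by
  classical
  rw [linearExtensions, mem_filter, mem_mk, Multiset.mem_lists_iff, Multiset.quot_mk_to_coe]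

theorem ofFn_mem_linearExtensions {n : ℕ} {g : Fin n → α} :
    List.ofFn g ∈ linearExtensions R S ↔
      (g.Injective ∧ ∀ x, x ∈ S ↔ ∃ i, g i = x) ∧ ∀ ⦃i j⦄, i < j → ¬ R (g j) (g i) := by
  rw [mem_linearExtensions, List.pairwise_ofFn, ← List.nodup_ofFn]
  refine and_congr_left' ⟨fun h => ⟨?_, fun x => ?_⟩, fun ⟨hnodup, hmem⟩ => ?_⟩
  · rw [← Multiset.coe_nodup, ← h]
    exact S.nodup
  · rw [← mem_val, h, Multiset.mem_coe, List.mem_ofFn]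
  · refine (Multiset.Nodup.ext S.nodup (Multiset.coe_nodup.2 hnodup)).2 fun x => ?_
    rw [mem_val, hmem, Multiset.mem_coe, List.mem_ofFn]

theorem append_singleton_mem_linearExtensions [DecidableEq α] [Std.Irrefl R] {w : List α} {x : α} :
    w ++ [x] ∈ linearExtensions R S ↔
      (x ∈ S ∧ ∀ y ∈ S, ¬ R x y) ∧ w ∈ linearExtensions R (S.erase x) := by
  have hval : S.val = ↑(w ++ [x]) ↔ x ∈ S ∧ (S.erase x).val = w := by
    rw [← Multiset.coe_add, Multiset.coe_singleton, add_comm, Multiset.singleton_add, erase_val]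
    constructor
    · intro h
      exact ⟨by simp [← mem_val, h], by rw [h, Multiset.erase_cons_head]⟩
    · rintro ⟨hx, h⟩
      rw [← h, Multiset.cons_erase hx]
  rw [mem_linearExtensions, mem_linearExtensions, hval, List.pairwise_append]
  have hmax (h : (S.erase x).val = w) : (∀ y ∈ w, ¬ R x y) ↔ ∀ y ∈ S, ¬ R x y := by
    have hirr : ¬ R x x := irrefl x
    simp only [← Multiset.mem_coe, ← h, mem_val, mem_erase]
    grind
  simp only [List.pairwise_singleton, List.mem_singleton, forall_eq, true_and]
  grind

theorem linearExtensions_empty : linearExtensions R ∅ = {[]} := by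
  ext w
  simp +contextual [mem_linearExtensions, eq_comm (a := (0 : Multiset α))]

open scoped Classical in
theorem card_linearExtensions_of_nonempty [DecidableEq α] [Std.Irrefl R] (hS : S.Nonempty) :
    #(linearExtensions R S) =
      ∑ x ∈ S with ∀ y ∈ S, ¬ R x y, #(linearExtensions R (S.erase x)) := by
  have hunion : linearExtensions R S = {x ∈ S | ∀ y ∈ S, ¬ R x y}.biUnion fun x =>
      (linearExtensions R (S.erase x)).image (· ++ [x]) := by
    ext w
    simp only [mem_biUnion, mem_image, mem_filter]
    constructor
    · intro hw
      obtain rfl | ⟨v, x, rfl⟩ := w.eq_nil_or_concat'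
      · simp [mem_linearExtensions, hS.ne_empty] at hw
      · obtain ⟨hx, hv⟩ := append_singleton_mem_linearExtensions.1 hw
        exact ⟨x, hx, v, hv, rfl⟩
    · rintro ⟨x, hx, v, hv, rfl⟩
      exact append_singleton_mem_linearExtensions.2 ⟨hx, hv⟩
  rw [hunion, card_biUnion]
  · exact sum_congr rfl fun x _ => card_image_of_injective _ (List.append_left_injective _)
  · refine fun x _ y _ hxy => disjoint_left.2 fun w hx hy => hxy ?_
    obtain ⟨v, -, rfl⟩ := mem_image.1 hx
    obtain ⟨u, -, h⟩ := mem_image.1 hy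
    simpa using (List.append_inj_right' h rfl).symm

theorem card_increasing_equiv_eq_card_linearExtensions [Std.Irrefl R] {n : ℕ} (hn : #S = n) :
    Nat.card {T : {x // x ∈ S} ≃ Fin n // ∀ x y : {x // x ∈ S}, R x y → T x < T y} =
      #(linearExtensions R S) := by
  have hincr (T : {x // x ∈ S} ≃ Fin n) : (∀ x y : {x // x ∈ S}, R x y → T x < T y) ↔
      ∀ ⦃i j⦄, i < j → ¬ R (T.symm j) (T.symm i) := by
    refine ⟨fun h i j hij hR => hij.asymm (by simpa using h _ _ hR), fun h x y hR => ?_⟩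
    refine lt_of_not_ge fun hle => ?_
    obtain heq | hlt := hle.eq_or_lt
    · exact irrefl (r := R) x (by simpa [T.injective heq] using hR)
    · exact h hlt (by simpa using hR)
  rw [← Fintype.card_coe, ← Nat.card_eq_fintype_card]
  refine Nat.card_congr (.ofBijective (fun T => ⟨List.ofFn fun i => (T.1.symm i : α),
    ofFn_mem_linearExtensions.2 ⟨⟨Subtype.val_injective.comp T.1.symm.injective, fun x =>
      ⟨fun hx => ⟨T.1 ⟨x, hx⟩, by simp⟩, ?_⟩⟩, (hincr T.1).1 T.2⟩⟩) ⟨fun T U hTU => ?_, ?_⟩)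
  · rintro ⟨i, rfl⟩
    exact (T.1.symm i).2
  · refine Subtype.ext (Equiv.symm_bijective.injective (Equiv.ext fun i => Subtype.ext ?_))
    exact congrFun (List.ofFn_injective (congrArg Subtype.val hTU)) i
  · rintro ⟨w, hw⟩
    obtain rfl : w.length = n := by
      rw [← hn, card_def, (mem_linearExtensions.1 hw).1, Multiset.coe_card]
    obtain ⟨⟨hinj, hmem⟩, hR⟩ := ofFn_mem_linearExtensions.1 (w.ofFn_get.symm ▸ hw)
    let e : Fin w.length ≃ {x // x ∈ S} := .ofBijective
      (fun i => ⟨w.get i, (hmem _).2 ⟨i, rfl⟩⟩)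
      ⟨fun i j hij => hinj (congrArg Subtype.val hij),
        fun x => ((hmem x).1 x.2).imp fun _ => Subtype.ext⟩
    exact ⟨⟨e.symm, (hincr e.symm).2 hR⟩, Subtype.ext w.ofFn_get⟩

end LinearExtensions

section Determinants

variable {R : Type*} [CommRing R]

theorem sum_det_updateRow_eq_trace_mul_adjugate {n : Type*} [Fintype n] [DecidableEq n]
    (A B : Matrix n n R) : ∑ i, (A.updateRow i (B i)).det = (B * A.adjugate).trace := by
  refine sum_congr rfl fun i _ => ?_
  rw [← cramer_transpose_apply, cramer_eq_adjugate_mulVec, ← adjugate_transpose, mulVec_transpose]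
  rfl

theorem sum_det_updateRow_sub_mul {n : Type*} [Fintype n] [DecidableEq n]
    (A : Matrix n n R) (x y : n → R) :
    ∑ i, (A.updateRow i fun j => (x i - y j) * A i j).det = (∑ i, x i - ∑ j, y j) * A.det := by
  have htrace (v : n → R) : (diagonal v * A.det • (1 : Matrix n n R)).trace =
      (∑ i, v i) * A.det := by
    rw [Matrix.mul_smul, mul_one, trace_smul, trace_diagonal, smul_eq_mul, mul_comm]
  have hrow (i : n) : (fun j => (x i - y j) * A i j) = (diagonal x * A - A * diagonal y) i := by
    ext j
    rw [Matrix.sub_apply, diagonal_mul, mul_diagonal]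
    ring
  simp only [hrow]
  calc ∑ i, (A.updateRow i ((diagonal x * A - A * diagonal y) i)).det
      = ((diagonal x * A - A * diagonal y) * A.adjugate).trace :=
        sum_det_updateRow_eq_trace_mul_adjugate A _
    _ = (diagonal x * (A * A.adjugate)).trace - (diagonal y * (A.adjugate * A)).trace := by
        rw [Matrix.sub_mul, trace_sub, Matrix.mul_assoc, trace_mul_cycle A,
          trace_mul_comm _ (diagonal y)]
    _ = (∑ i, x i - ∑ j, y j) * A.det := by
        rw [mul_adjugate, adjugate_mul, htrace, htrace, sub_mul]

theorem mul_descPochhammer_eval_sub_one (n : ℕ) (x : R) :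
    x * (descPochhammer R n).eval (x - 1) = (x - n) * (descPochhammer R n).eval x := by
  have hleft := congrArg (Polynomial.eval x) (descPochhammer_succ_left R n)
  rw [descPochhammer_succ_eval] at hleft
  simpa [mul_comm] using hleft.symm

variable {q : ℕ}

/-- The product of the differences `x i - x j` over `i < j`, a Vandermonde determinant with
the signs chosen so that it is positive on strictly decreasing sequences. -/
def differenceProduct (x : Fin q → R) : R :=
  ∏ i, ∏ j ∈ Ioi i, (x i - x j)

theorem differenceProduct_eq_zero {x : Fin q → R} {i j : Fin q} (hij : i < j) (h : x i = x j) :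
    differenceProduct x = 0 :=
  prod_eq_zero (mem_univ i) (prod_eq_zero (mem_Ioi.2 hij) (sub_eq_zero.2 h))

theorem differenceProduct_cons (a : R) (x : Fin q → R) :
    differenceProduct (Fin.cons a x : Fin (q + 1) → R) =
      (∏ j, (a - x j)) * differenceProduct x := by
  simp [differenceProduct, Fin.prod_univ_succ, Fin.prod_Ioi_succ]

theorem differenceProduct_eq_sign_mul_det_vandermonde (x : Fin q → R) :
    differenceProduct x = (∏ i : Fin q, ∏ _j ∈ Ioi i, (-1)) * (vandermonde x).det := by
  simp_rw [differenceProduct, det_vandermonde, ← prod_mul_distrib, neg_one_mul, neg_sub]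

variable [IsDomain R]

theorem sum_mul_det_vandermonde_update_sub_one (x : Fin q → R) :
    ∑ i, x i * (vandermonde (Function.update x i (x i - 1))).det =
      (∑ i, x i - ∑ i : Fin q, (i : R)) * (vandermonde x).det := by
  let P (y : Fin q → R) : Matrix (Fin q) (Fin q) R := of fun i j => (descPochhammer R j).eval (y i)
  have hdet (y : Fin q → R) : (vandermonde y).det = (P y).det :=
    det_eval_matrixOfPolynomials_eq_det_vandermonde y _ (fun j => descPochhammer_natDegree R j)
      fun j => monic_descPochhammer R j
  have hrow (i : Fin q) : x i * (P (Function.update x i (x i - 1))).det =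
      ((P x).updateRow i fun j => (x i - (j : ℕ)) * P x i j).det := by
    have hP : P (Function.update x i (x i - 1)) =
        (P x).updateRow i fun j => (descPochhammer R j).eval (x i - 1) := by
      ext k j
      obtain rfl | hk := eq_or_ne k i <;> simp [P, *]
    rw [hP, ← det_updateRow_smul]
    congr 2
    ext j
    exact mul_descPochhammer_eval_sub_one j (x i)
  simp only [hdet, hrow, sum_det_updateRow_sub_mul]

theorem sum_mul_differenceProduct_update_sub_one (x : Fin q → R) :
    ∑ i, x i * differenceProduct (Function.update x i (x i - 1)) =
      (∑ i, x i - ∑ i : Fin q, (i : R)) * differenceProduct x := by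
  simp only [differenceProduct_eq_sign_mul_det_vandermonde]
  rw [mul_left_comm, ← sum_mul_det_vandermonde_update_sub_one, mul_sum]
  exact sum_congr rfl fun i _ => mul_left_comm _ _ _

end Determinants

section Tableaux

variable {q : ℕ} {l : Fin q → ℕ} {i : Fin q}

/-- The generating relations of the order on cells: `x` is to the left of `y` in the same row, or
above `y` in the same column. -/
def CellLT (x y : Σ _ : Fin q, ℕ) : Prop :=
  (x.1 = y.1 ∧ x.2 < y.2) ∨ (x.1 < y.1 ∧ x.2 = y.2)

instance : Std.Irrefl (CellLT (q := q)) where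
  irrefl _ h := by simp [CellLT] at h

theorem mem_sytShape {x : Σ _ : Fin q, ℕ} : x ∈ sytShape q l ↔ x.2 < l x.1 := by
  simp [sytShape]

theorem sytCount_eq_card_linearExtensions (l : Fin q → ℕ) :
    sytCount q l = #(linearExtensions CellLT (sytShape q l)) := by
  have hcard : #(sytShape q l) = ∑ i, l i := by simp [sytShape]
  rw [← card_increasing_equiv_eq_card_linearExtensions hcard, sytCount]
  simp only [IsSYT, CellLT, or_imp, and_imp, forall_and]

theorem sytCount_zero : sytCount q 0 = 1 := by
  have hempty : sytShape q 0 = ∅ := eq_empty_of_forall_notMem fun x hx => by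
    simp [mem_sytShape] at hx
  rw [sytCount_eq_card_linearExtensions, hempty, linearExtensions_empty, card_singleton]

/-- The rows of `l` that end in a corner, that is, in a box that can be removed. -/
def cornerRows (l : Fin q → ℕ) : Finset (Fin q) :=
  {i | 0 < l i ∧ ∀ j, i < j → l j < l i}

/-- The shape obtained from `l` by removing the last box of row `i`; nothing changes when the row
is empty. -/
def removeBox (l : Fin q → ℕ) (i : Fin q) : Fin q → ℕ :=
  Function.update l i (l i - 1)

theorem mem_cornerRows : i ∈ cornerRows l ↔ 0 < l i ∧ ∀ j, i < j → l j < l i := by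
  simp [cornerRows]

theorem antitone_removeBox (hl : Antitone l) (hi : i ∈ cornerRows l) :
    Antitone (removeBox l i) := by
  intro a b hab
  have hcorner := (mem_cornerRows.1 hi).2 b
  have := hl hab
  simp only [removeBox, Function.update_apply]
  grind

theorem sum_removeBox_add_one (hi : 0 < l i) : ∑ j, removeBox l i j + 1 = ∑ j, l j := by
  rw [removeBox, sum_update_of_mem (mem_univ i), ← add_sum_erase univ l (mem_univ i), erase_eq]
  omega

theorem sytShape_erase (l : Fin q → ℕ) (i : Fin q) :
    (sytShape q l).erase ⟨i, l i - 1⟩ = sytShape q (removeBox l i) := by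
  ext ⟨a, b⟩
  obtain rfl | ha := eq_or_ne a i
  · simp only [mem_erase, mem_sytShape, removeBox, Function.update_self, ne_eq, Sigma.mk.injEq,
      heq_eq_eq, true_and]
    omega
  · simp [mem_sytShape, removeBox, ha]

theorem mem_sytShape_and_maximal_iff {x : Σ _ : Fin q, ℕ} :
    (x ∈ sytShape q l ∧ ∀ y ∈ sytShape q l, ¬ CellLT x y) ↔
      x.1 ∈ cornerRows l ∧ x.2 = l x.1 - 1 := by
  obtain ⟨i, b⟩ := x
  simp only [mem_sytShape, mem_cornerRows, CellLT]
  constructor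
  · rintro ⟨hb, hmax⟩
    have hlast : b = l i - 1 := by
      by_contra hne
      exact hmax ⟨i, b + 1⟩ (by simp only; omega) (.inl ⟨rfl, b.lt_succ_self⟩)
    refine ⟨⟨by omega, fun j hj => ?_⟩, hlast⟩
    by_contra hlt
    exact hmax ⟨j, b⟩ (by simp only; omega) (.inr ⟨hj, rfl⟩)
  · rintro ⟨⟨hpos, hlt⟩, rfl⟩
    refine ⟨by omega, ?_⟩
    rintro ⟨j, c⟩ hc (⟨rfl, h⟩ | ⟨hij, rfl⟩)
    · simp only at hc h
      omega
    · have := hlt j hij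
      simp only at hc
      omega

theorem sytCount_eq_sum_removeBox (hl : l ≠ 0) :
    sytCount q l = ∑ i ∈ cornerRows l, sytCount q (removeBox l i) := by
  classical
  obtain ⟨i, hi⟩ := Function.ne_iff.1 hl
  have hne : (sytShape q l).Nonempty := ⟨⟨i, 0⟩, mem_sytShape.2 (Nat.pos_of_ne_zero hi)⟩
  rw [sytCount_eq_card_linearExtensions, card_linearExtensions_of_nonempty hne]
  refine (sum_bij (fun i _ => (⟨i, l i - 1⟩ : Σ _ : Fin q, ℕ)) (fun i hi => ?_)
    (fun i _ j _ h => congrArg Sigma.fst h) (fun x hx => ?_) fun i _ => ?_).symm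
  · exact mem_filter.2 (mem_sytShape_and_maximal_iff.2 ⟨hi, rfl⟩)
  · obtain ⟨hcorner, hlast⟩ := mem_sytShape_and_maximal_iff.1 (mem_filter.1 hx)
    exact ⟨x.1, hcorner, Sigma.ext rfl (heq_of_eq hlast.symm)⟩
  · rw [sytCount_eq_card_linearExtensions, sytShape_erase]

end Tableaux

section FrobeniusFormula

variable {q : ℕ} {l : Fin q → ℕ} {i : Fin q}

/-- Frobenius' shifted parts `λ_i + q - i` of a partition into `q` parts, that is, the hook lengths
in its first column; rows are indexed from `0`, whence `q - 1 - i` here. -/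
def shiftedPart (l : Fin q → ℕ) (i : Fin q) : ℕ :=
  l i + i.rev

theorem shiftedPart_cons (a : ℕ) (l : Fin q → ℕ) :
    shiftedPart (Fin.cons a l : Fin (q + 1) → ℕ) = Fin.cons (a + q) (shiftedPart l) := by
  funext i
  cases i using Fin.cases <;> simp [shiftedPart, Fin.val_rev]

theorem shiftedPart_removeBox (hi : 0 < l i) :
    shiftedPart (removeBox l i) = Function.update (shiftedPart l) i (shiftedPart l i - 1) := by
  funext j
  obtain rfl | hj := eq_or_ne j i
  · simp only [shiftedPart, removeBox, Function.update_self]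
    omega
  · simp [shiftedPart, removeBox, hj]

theorem prod_factorial_shiftedPart_eq (hi : 0 < l i) :
    ∏ j, (shiftedPart l j).factorial =
      shiftedPart l i * ∏ j, (shiftedPart (removeBox l i) j).factorial := by
  have hpos : shiftedPart l i ≠ 0 := by
    rw [shiftedPart]
    omega
  rw [shiftedPart_removeBox hi, ← mul_prod_erase univ _ (mem_univ i),
    ← mul_prod_erase univ (fun j => (Function.update (shiftedPart l) i _ j).factorial) (mem_univ i),
    Function.update_self, ← mul_assoc, Nat.mul_factorial_pred hpos]
  congr 1
  refine prod_congr rfl fun j hj => ?_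
  rw [Function.update_of_ne (ne_of_mem_erase hj)]

theorem cast_shiftedPart_removeBox (hi : 0 < l i) :
    (fun j => (shiftedPart (removeBox l i) j : ℤ)) =
      Function.update (fun j => (shiftedPart l j : ℤ)) i (shiftedPart l i - 1) := by
  have hpos : 1 ≤ shiftedPart l i := by
    rw [shiftedPart]
    omega
  rw [shiftedPart_removeBox hi, ← Nat.cast_pred hpos]
  exact Function.comp_update (Nat.cast : ℕ → ℤ) _ _ _

theorem shiftedPart_mul_differenceProduct_eq_zero (hl : Antitone l) (hi : i ∉ cornerRows l) :
    (shiftedPart l i : ℤ) * differenceProduct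
      (Function.update (fun j => (shiftedPart l j : ℤ)) i (shiftedPart l i - 1)) = 0 := by
  have hcorner : 0 < l i → ∃ j, i < j ∧ l i ≤ l j := by
    simpa [mem_cornerRows] using hi
  by_cases hlast : (i : ℕ) + 1 < q
  · let k : Fin q := ⟨i + 1, hlast⟩
    have hik : i < k := Fin.lt_def.2 (Nat.lt_succ_self i)
    have hlk : l k = l i := by
      refine (hl hik.le).antisymm ?_
      obtain hzero | hpos := (l i).eq_zero_or_pos
      · omega
      · obtain ⟨j, hij, hle⟩ := hcorner hpos
        exact hle.trans (hl (Fin.le_def.2 (Fin.lt_def.1 hij)))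
    refine mul_eq_zero_of_right _ (differenceProduct_eq_zero hik ?_)
    rw [Function.update_self, Function.update_of_ne hik.ne']
    simp only [shiftedPart, hlk, Fin.val_rev, k]
    omega
  · have hzero : l i = 0 := by
      by_contra hne
      obtain ⟨j, hij, -⟩ := hcorner (Nat.pos_of_ne_zero hne)
      have := j.isLt
      have := Fin.lt_def.1 hij
      omega
    have : shiftedPart l i = 0 := by
      simp only [shiftedPart, hzero, Fin.val_rev]
      omega
    rw [this, Nat.cast_zero, zero_mul]

theorem sum_shiftedPart_sub (l : Fin q → ℕ) :
    ∑ i, (shiftedPart l i : ℤ) - ∑ i : Fin q, (i : ℤ) = ∑ i, (l i : ℤ) := by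
  have hrev : ∑ i : Fin q, ((i.rev : ℕ) : ℤ) = ∑ i : Fin q, (i : ℤ) :=
    Equiv.sum_comp Fin.revPerm fun i : Fin q => ((i : ℕ) : ℤ)
  simp only [shiftedPart, Nat.cast_add, sum_add_distrib, hrev, add_sub_cancel_right]

theorem sum_cornerRows_shiftedPart_mul_differenceProduct (hl : Antitone l) :
    ∑ i ∈ cornerRows l, (shiftedPart l i : ℤ) *
        differenceProduct (fun j => (shiftedPart (removeBox l i) j : ℤ)) =
      (∑ i, (l i : ℤ)) * differenceProduct fun i => (shiftedPart l i : ℤ) := by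
  rw [← sum_shiftedPart_sub l, ← sum_mul_differenceProduct_update_sub_one,
    ← sum_subset (subset_univ (cornerRows l)) fun i _ hi =>
      shiftedPart_mul_differenceProduct_eq_zero hl hi]
  refine sum_congr rfl fun i hi => ?_
  rw [cast_shiftedPart_removeBox (mem_cornerRows.1 hi).1]

theorem differenceProduct_shiftedPart_cons_const (q n a : ℕ) :
    differenceProduct (fun i =>
        (shiftedPart (Fin.cons (n + a) fun _ => n : Fin (q + 1) → ℕ) i : ℤ)) =
      (a + 1).ascFactorial q *
        differenceProduct fun i : Fin q => (shiftedPart (fun _ => n) i : ℤ) := by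
  have hcast : (fun i => (shiftedPart (Fin.cons (n + a) fun _ => n : Fin (q + 1) → ℕ) i : ℤ)) =
      Fin.cons ((n + a + q : ℕ) : ℤ) fun i : Fin q => (shiftedPart (fun _ => n) i : ℤ) := by
    rw [shiftedPart_cons]
    exact Fin.comp_cons (Nat.cast : ℕ → ℤ) _ _
  rw [hcast, differenceProduct_cons, Nat.ascFactorial_eq_prod_range,
    ← Fin.prod_univ_eq_prod_range (a + 1 + ·), Nat.cast_prod]
  congr 1
  refine prod_congr rfl fun j _ => ?_
  simp only [shiftedPart, Fin.val_rev]
  omega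

theorem prod_factorial_shiftedPart_cons (a : ℕ) (l : Fin q → ℕ) :
    ∏ i, (shiftedPart (Fin.cons a l : Fin (q + 1) → ℕ) i).factorial =
      (a + q).factorial * ∏ i, (shiftedPart l i).factorial := by
  simp only [shiftedPart_cons, Fin.prod_univ_succ, Fin.cons_zero, Fin.cons_succ]

theorem differenceProduct_shiftedPart_zero (q : ℕ) :
    differenceProduct (fun i => (shiftedPart (0 : Fin q → ℕ) i : ℤ)) =
      ((∏ i, (shiftedPart (0 : Fin q → ℕ) i).factorial : ℕ) : ℤ) := by
  induction q with
  | zero => simp [differenceProduct]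
  | succ q ih =>
    have hcons : (0 : Fin (q + 1) → ℕ) = Fin.cons (0 + 0) fun _ => 0 := (Fin.cons_self_tail 0).symm
    rw [hcons, differenceProduct_shiftedPart_cons_const, prod_factorial_shiftedPart_cons]
    simp only [zero_add, Nat.one_ascFactorial, Nat.cast_mul]
    exact congrArg (_ * ·) ih

theorem sytCount_mul_prod_factorial_shiftedPart (hl : Antitone l) :
    (sytCount q l : ℤ) * ((∏ i, (shiftedPart l i).factorial : ℕ) : ℤ) =
      (∑ i, l i).factorial * differenceProduct fun i => (shiftedPart l i : ℤ) := by
  induction hn : ∑ i, l i generalizing l with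
  | zero =>
    obtain rfl : l = 0 := funext (by simpa using hn)
    simp [sytCount_zero, differenceProduct_shiftedPart_zero]
  | succ n ih =>
    have hne : l ≠ 0 := by
      rintro rfl
      simp at hn
    have hcorner (i : Fin q) (hi : i ∈ cornerRows l) :
        (sytCount q (removeBox l i) : ℤ) * ((∏ j, (shiftedPart l j).factorial : ℕ) : ℤ) =
          n.factorial * (shiftedPart l i *
            differenceProduct fun j => (shiftedPart (removeBox l i) j : ℤ)) := by
      have hpos := (mem_cornerRows.1 hi).1
      have hsum := sum_removeBox_add_one hpos
      rw [prod_factorial_shiftedPart_eq hpos, Nat.cast_mul,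
        mul_left_comm, ih (antitone_removeBox hl hi) (by omega), mul_left_comm]
    calc (sytCount q l : ℤ) * ((∏ i, (shiftedPart l i).factorial : ℕ) : ℤ)
        = ∑ i ∈ cornerRows l, n.factorial * (shiftedPart l i *
            differenceProduct fun j => (shiftedPart (removeBox l i) j : ℤ)) := by
          rw [sytCount_eq_sum_removeBox hne, Nat.cast_sum, sum_mul, sum_congr rfl hcorner]
      _ = n.factorial * ((n + 1 : ℕ) * differenceProduct fun i => (shiftedPart l i : ℤ)) := by
          rw [← mul_sum, sum_cornerRows_shiftedPart_mul_differenceProduct hl, ← Nat.cast_sum, hn]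
      _ = (n + 1).factorial * differenceProduct fun i => (shiftedPart l i : ℤ) := by
          rw [Nat.factorial_succ]
          push_cast
          ring

theorem sytCount_cons_const_mul_prod_factorial (q n a : ℕ) :
    (sytCount (q + 1) (Fin.cons (n + a) fun _ => n) : ℤ) *
        ((n + a + q).factorial * (∏ i : Fin q, (shiftedPart (fun _ => n) i).factorial : ℕ)) =
      ((q + 1) * n + a).factorial * ((a + 1).ascFactorial q *
        differenceProduct fun i : Fin q => (shiftedPart (fun _ => n) i : ℤ)) := by
  have hanti : Antitone (Fin.cons (n + a) fun _ => n : Fin (q + 1) → ℕ) := by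
    refine Fin.antitone_iff_succ_le.2 fun i => ?_
    cases q with
    | zero => exact i.elim0
    | succ q => cases i using Fin.cases <;> simp
  have hsum : ∑ i, (Fin.cons (n + a) fun _ => n : Fin (q + 1) → ℕ) i = (q + 1) * n + a := by
    rw [Fin.sum_cons, sum_const, card_univ, Fintype.card_fin, smul_eq_mul]
    ring
  rw [← Nat.cast_mul, ← prod_factorial_shiftedPart_cons,
    sytCount_mul_prod_factorial_shiftedPart hanti, hsum, differenceProduct_shiftedPart_cons_const]

theorem ascFactorial_mul_sytCount_cons_const (q n a : ℕ) :
    a.factorial * (n + q + 1).ascFactorial a * sytCount (q + 1) (Fin.cons (n + a) fun _ => n) =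
      ((q + 1) * n + 1).ascFactorial a * (q + 1).ascFactorial a *
        sytCount (q + 1) (fun _ => n) := by
  have hplus := sytCount_cons_const_mul_prod_factorial q n a
  have hrect := sytCount_cons_const_mul_prod_factorial q n 0
  have hconst : (Fin.cons (n + 0) fun _ => n : Fin (q + 1) → ℕ) = fun _ => n :=
    Fin.cons_self_tail fun _ => n
  rw [add_right_comm, ← Nat.factorial_mul_ascFactorial,
    ← Nat.factorial_mul_ascFactorial ((q + 1) * n)] at hplus
  rw [hconst, zero_add, Nat.one_ascFactorial, add_zero, add_zero] at hrect
  have hfactorial : a.factorial * (a + 1).ascFactorial q =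
      q.factorial * (q + 1).ascFactorial a := by
    rw [Nat.factorial_mul_ascFactorial, Nat.factorial_mul_ascFactorial, add_comm]
  have hne : ((n + q).factorial : ℤ) *
      (∏ i : Fin q, (shiftedPart (fun _ => n) i).factorial : ℕ) ≠ 0 := by
    positivity
  zify at hfactorial ⊢
  refine mul_right_cancel₀ hne ?_
  rw [Nat.cast_mul, Nat.cast_mul] at hplus
  set Δ : ℤ := differenceProduct fun i : Fin q => (shiftedPart (fun _ => n) i : ℤ)
  linear_combination (a.factorial : ℤ) * hplus
    + (((q + 1) * n).factorial * ((q + 1) * n + 1).ascFactorial a * Δ : ℤ) * hfactorial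
    - (((q + 1) * n + 1).ascFactorial a * (q + 1).ascFactorial a : ℤ) * hrect

end FrobeniusFormula

theorem syt_count_eps_plus_row_two_general (r d a : ℕ) (hd : 0 < d) (hdr : d ≤ r) :
    a.factorial * r.ascFactorial a *
        sytCount d (fun i => if (i : ℕ) = 0 then r - d + a else r - d) =
      (d * (r - d) + 1).ascFactorial a * d.ascFactorial a * sytCount d (fun _ => r - d) := by
  obtain ⟨n, rfl⟩ := Nat.exists_eq_add_of_le' hdr
  obtain ⟨q, rfl⟩ := Nat.exists_eq_add_one_of_ne_zero hd.ne'
  have hshape : (fun i : Fin (q + 1) => if (i : ℕ) = 0 then n + a else n) =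
      Fin.cons (n + a) fun _ => n := by
    funext i
    cases i using Fin.cases <;> simp
  rw [Nat.add_sub_cancel, hshape]
  exact ascFactorial_mul_sytCount_cons_const q n a

/-- For `0 < d < r`, `ε` the rectangular partition with `d` parts equal to `r - d`,
`m = d(r-d) + 1`, and `ε+2` the partition obtained from `ε` by adding two boxes to the
first row, one has `2r(r+1) · f^{ε+2} = m(m+1)d(d+1) · f^{ε}`. -/
theorem syt_count_eps_plus_row_two (r d : ℕ) (hd : 0 < d) (hdr : d < r) :
    2 * r * (r + 1) * sytCount d (fun i => if (i : ℕ) = 0 then r - d + 2 else r - d) =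
      (d * (r - d) + 1) * (d * (r - d) + 1 + 1) * d * (d + 1) *
        sytCount d (fun _ => r - d) := by
  simpa [Nat.ascFactorial_succ, mul_assoc, mul_comm, mul_left_comm] using
    syt_count_eps_plus_row_two_general r d 2 hd hdr.le
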